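/- Let h = f0*g - g0*f componentwise, i.e. h_i = f0*g_i + f_i*g0 for i = 0,1,2,3, where f0,f1,f2,f3 ∈ K[s,u] and g0,g1,g2,g3 ∈ K[t,v]. Then for any point (s0,u0,t0,v0), all four polynomials h_0,h_1,h_2,h_3 vanish at (s0,u0,t0,v0) if and only if f0(s0,u0) = 0 and g0(t0,v0) = 0, provided gcd(f0,f1,f2,f3) = 1 and gcd(g0,g1,g2,g3) = 1 and the f_i have no common zero when f0 ≠ 0 at that point (i.e., (f0,...,f3) and (g0,...,g3) each have no common projective zero). -/

import Mathlib

open MvPolynomial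

/-- Basepoint lemma for translational surfaces: all four `h i = f 0 * g i + f i * g 0`
vanish at a point of `ℙ¹ × ℙ¹` iff `f 0` and `g 0` vanish there. -/
theorem stmt_0 {K : Type*} [Field K] [IsAlgClosed K] [CharZero K]
    (m n : ℕ) (f g : Fin 4 → MvPolynomial (Fin 2) K)
    (hf : ∀ i, (f i).IsHomogeneous m) (hg : ∀ i, (g i).IsHomogeneous n)
    (hfgcd : ∀ d : MvPolynomial (Fin 2) K, (∀ i, d ∣ f i) → IsUnit d)
    (hggcd : ∀ d : MvPolynomial (Fin 2) K, (∀ i, d ∣ g i) → IsUnit d)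
    (hfbp : ∀ p : Fin 2 → K, p ≠ 0 → ∃ i, eval p (f i) ≠ 0)
    (hgbp : ∀ q : Fin 2 → K, q ≠ 0 → ∃ i, eval q (g i) ≠ 0)
    (p q : Fin 2 → K) (hp : p ≠ 0) (hq : q ≠ 0) :
    (∀ i, eval p (f 0) * eval q (g i) + eval p (f i) * eval q (g 0) = 0) ↔
      eval p (f 0) = 0 ∧ eval q (g 0) = 0 := by
  constructor
  · intro h
    obtain ⟨i, hi⟩ := hfbp p hp
    obtain ⟨j, hj⟩ := hgbp q hq
    have h0 : 2 * (eval p (f 0) * eval q (g 0)) = 0 := by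
      rw [two_mul]
      exact h 0
    have hprod : eval p (f 0) * eval q (g 0) = 0 :=
      (mul_eq_zero.mp h0).resolve_left two_ne_zero
    rcases mul_eq_zero.mp hprod with hf0 | hg0
    · have hi' := h i
      rw [hf0, zero_mul, zero_add] at hi'
      exact ⟨hf0, (mul_eq_zero.mp hi').resolve_left hi⟩
    · have hj' := h j
      rw [hg0, mul_zero, add_zero] at hj'
      exact ⟨(mul_eq_zero.mp hj').resolve_right hj, hg0⟩
  · rintro ⟨hf0, hg0⟩ i
    rw [hf0, hg0, zero_mul, mul_zero, add_zero]
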